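/- arXiv:1612.08698 — 5 statements merged into one kernel-verified Lean document; each statement's English description precedes it below -/
import Mathlib

section
/- For every integer d ≥ 0, there exists a real number ε > 0 such that for every finite d-degenerate graph G and every list assignment L for G with |L(v)| ≥ d+2 for all vertices v, the graph G with the list assignment L is ε-flexible. -/
def IsLColoring {V : Type*} (G : SimpleGraph V) (L : V → Finset ℕ) (φ : V → ℕ) : Prop :=
  (∀ v, φ v ∈ L v) ∧ ∀ ⦃u w : V⦄, G.Adj u w → φ u ≠ φ w

def EpsSat {V : Type*} (G : SimpleGraph V) (L : V → Finset ℕ) (D : Finset V)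
    (r : V → ℕ) (ε : ℝ) : Prop :=
  ∃ φ : V → ℕ, IsLColoring G L φ ∧ ε * D.card ≤ ((D.filter fun v => φ v = r v).card : ℝ)

def Flexible {V : Type*} (G : SimpleGraph V) (L : V → Finset ℕ) (ε : ℝ) : Prop :=
  ∀ (D : Finset V) (r : V → ℕ), (∀ v ∈ D, r v ∈ L v) → EpsSat G L D r ε

/-- `G` is `d`-degenerate: every subgraph of `G` (with at least one vertex)
has a vertex of degree at most `d`. -/
def Degenerate {V : Type*} (G : SimpleGraph V) (d : ℕ) : Prop :=
  ∀ H : G.Subgraph, H.verts.Nonempty → ∃ v ∈ H.verts, (H.neighborSet v).ncard ≤ d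

/-!
Color the vertices one at a time, each new vertex having at most `d` earlier neighbors, and choose
its color uniformly among the colors of its list that these neighbors do not use. At least two
colors are always free, so a vertex avoids a given color `c` with conditional probability at
least `1 / 2`, and a set `W` of colored vertices avoids `c` with probability at least `2⁻¹ ^ |W|`.
Applied to the earlier neighbors of `v`, this makes `c ∈ L v` free at `v` with probability at least
`2⁻¹ ^ d`, and then `v` gets it with probability at least `1 / |L v|`. After shrinking the lists to
size `d + 2`, the expected proportion of satisfied requests is at least `2⁻¹ ^ d / (d + 2)`.
Infinite graphs follow by compactness.
-/

open Finset
open scoped ENNReal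

section Probability

variable {α β ι : Type*}

lemma mul_toOuterMeasure_le_toOuterMeasure_bind (p : PMF α) (f : α → PMF β) {s : Set α}
    {t : Set β} {q : ℝ≥0∞} (h : ∀ a ∈ s, q ≤ (f a).toOuterMeasure t) :
    q * p.toOuterMeasure s ≤ (p.bind f).toOuterMeasure t := by
  rw [PMF.toOuterMeasure_bind_apply, PMF.toOuterMeasure_apply, ← ENNReal.tsum_mul_left]
  refine ENNReal.tsum_le_tsum fun a ↦ ?_
  by_cases ha : a ∈ s
  · rw [Set.indicator_of_mem ha, mul_comm]
    gcongr
    exact h a ha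
  · simp [ha]

lemma le_toOuterMeasure_uniformOfFinset {A B : Finset α} (hA : A.Nonempty) (hBA : B ⊆ A)
    {t : Set α} (hBt : ↑B ⊆ t) {q : ℝ≥0∞} (hq : q * #A ≤ #B) :
    q ≤ (PMF.uniformOfFinset A hA).toOuterMeasure t := by
  classical
  rw [PMF.toOuterMeasure_uniformOfFinset_apply,
    ENNReal.le_div_iff_mul_le (by simp [hA.ne_empty]) (by simp)]
  refine hq.trans ?_
  gcongr
  exact fun b hb ↦ mem_filter.2 ⟨hBA hb, hBt hb⟩

lemma exists_mem_support_le_of_le_tsum {p : PMF α} {f : α → ℝ≥0∞} {c : ℝ≥0∞} (hc : c ≠ ∞)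
    (h : c ≤ ∑' a, p a * f a) : ∃ a ∈ p.support, c ≤ f a := by
  by_contra! hlt
  obtain ⟨a₀, ha₀⟩ := p.support_nonempty
  have htsum : ∑' a, p a * c = c := by rw [ENNReal.tsum_mul_right, p.tsum_coe, one_mul]
  have hle (a : α) : p a * f a ≤ p a * c := by
    by_cases ha : a ∈ p.support
    · gcongr
      exact (hlt a ha).le
    · simp [(p.apply_eq_zero_iff a).2 ha]
  have hfin : ∑' a, p a * f a ≠ ∞ :=
    ne_top_of_le_ne_top hc ((ENNReal.tsum_le_tsum hle).trans_eq htsum)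
  have hlt₀ : p a₀ * f a₀ < p a₀ * c :=
    ENNReal.mul_lt_mul_right ((p.mem_support_iff a₀).1 ha₀) (p.apply_ne_top a₀) (hlt a₀ ha₀)
  exact h.not_gt ((ENNReal.tsum_lt_tsum hfin hle hlt₀).trans_eq htsum)

lemma sum_toOuterMeasure_eq_tsum_card (p : PMF α) (D : Finset ι) (P : ι → α → Prop)
    [∀ i, DecidablePred (P i)] :
    ∑ i ∈ D, p.toOuterMeasure {a | P i a} = ∑' a, p a * #{i ∈ D | P i a} := by
  simp_rw [PMF.toOuterMeasure_apply]
  rw [← Summable.tsum_finsetSum fun _ _ ↦ ENNReal.summable]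
  refine tsum_congr fun a ↦ ?_
  simp [Set.indicator_apply, ← sum_filter, mul_comm]

lemma exists_mem_support_mul_card_le {p : PMF α} {D : Finset ι} {P : ι → α → Prop}
    [∀ i, DecidablePred (P i)] {q : ℝ≥0∞} (hq : q ≠ ∞)
    (h : ∀ i ∈ D, q ≤ p.toOuterMeasure {a | P i a}) :
    ∃ a ∈ p.support, q * #D ≤ #{i ∈ D | P i a} := by
  refine exists_mem_support_le_of_le_tsum (ENNReal.mul_ne_top hq (ENNReal.natCast_ne_top _)) ?_
  rw [← sum_toOuterMeasure_eq_tsum_card, mul_comm, ← nsmul_eq_mul]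
  exact card_nsmul_le_sum _ _ _ h

end Probability

section Resample

variable {V α : Type*} [DecidableEq V] {p : PMF (V → α)} {v : V} {A : (V → α) → Finset α}
  {hA : ∀ φ, (A φ).Nonempty}

/-- The law of the random function obtained from a `p`-distributed `φ` by replacing its value at `v`
by a uniformly random element of `A φ`. -/
noncomputable def resample (p : PMF (V → α)) (v : V) (A : (V → α) → Finset α)
    (hA : ∀ φ, (A φ).Nonempty) : PMF (V → α) :=
  p.bind fun φ ↦ (PMF.uniformOfFinset (A φ) (hA φ)).map (Function.update φ v)

lemma mem_support_resample_iff {ψ : V → α} :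
    ψ ∈ (resample p v A hA).support ↔
      ∃ φ ∈ p.support, ∃ c ∈ A φ, Function.update φ v c = ψ := by
  simp only [resample, PMF.mem_support_bind_iff, PMF.mem_support_map_iff,
    PMF.mem_support_uniformOfFinset_iff]

lemma mul_toOuterMeasure_le_toOuterMeasure_resample {s t : Set (V → α)} {q : ℝ≥0∞}
    (h : ∀ φ ∈ s, ∃ B ⊆ A φ, q * #(A φ) ≤ #B ∧ ∀ c ∈ B, Function.update φ v c ∈ t) :
    q * p.toOuterMeasure s ≤ (resample p v A hA).toOuterMeasure t := by
  refine mul_toOuterMeasure_le_toOuterMeasure_bind p _ fun φ hφ ↦ ?_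
  obtain ⟨B, hBA, hq, hBt⟩ := h φ hφ
  rw [PMF.toOuterMeasure_map_apply]
  exact le_toOuterMeasure_uniformOfFinset (hA φ) hBA hBt hq

lemma toOuterMeasure_le_toOuterMeasure_resample {P : (V → α) → Prop} {S : Set V}
    (hP : DependsOn P S) (hv : v ∉ S) :
    p.toOuterMeasure {φ | P φ} ≤ (resample p v A hA).toOuterMeasure {φ | P φ} := by
  rw [← one_mul (p.toOuterMeasure _)]
  refine mul_toOuterMeasure_le_toOuterMeasure_resample fun φ hφ ↦
    ⟨A φ, Subset.rfl, (one_mul _).le, fun c _ ↦ ?_⟩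
  have hP_eq : P (Function.update φ v c) = P φ :=
    hP fun u hu ↦ Function.update_of_ne (ne_of_mem_of_not_mem hu hv) _ _
  exact hP_eq.mpr hφ

lemma inv_two_pow_card_le_toOuterMeasure_resample {W : Finset V} {c : α}
    (hp : 2⁻¹ ^ #(W.erase v) ≤ p.toOuterMeasure {φ | ∀ w ∈ W.erase v, φ w ≠ c})
    (hA₂ : ∀ φ, 2 ≤ #(A φ)) :
    2⁻¹ ^ #W ≤ (resample p v A hA).toOuterMeasure {φ | ∀ w ∈ W, φ w ≠ c} := by
  classical
  by_cases hvW : v ∈ W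
  · rw [← card_erase_add_one hvW, pow_succ']
    grw [hp]
    refine mul_toOuterMeasure_le_toOuterMeasure_resample fun φ hφ ↦
      ⟨(A φ).erase c, erase_subset _ _, ?_, fun x hx w hw ↦ ?_⟩
    · have hhalf : #(A φ) ≤ 2 * #((A φ).erase c) := by
        have hpred := pred_card_le_card_erase (s := A φ) (a := c)
        specialize hA₂ φ
        lia
      rw [ENNReal.inv_mul_le_iff two_ne_zero ENNReal.ofNat_ne_top]
      exact_mod_cast hhalf
    · rcases eq_or_ne w v with rfl | hwv
      · simpa using ne_of_mem_erase hx
      · simpa [hwv] using hφ w (mem_erase.2 ⟨hwv, hw⟩)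
  · rw [erase_eq_of_notMem hvW] at hp
    have hdep : DependsOn (fun φ : V → α ↦ ∀ w ∈ W, φ w ≠ c) W := fun φ ψ h ↦
      propext <| forall₂_congr fun w hw ↦ by rw [h w hw]
    exact hp.trans (toOuterMeasure_le_toOuterMeasure_resample hdep hvW)

end Resample

section PartialColoring

variable {V α : Type*} {G : SimpleGraph V} {L : V → Finset α}

/-- `φ` restricts to an `L`-coloring of the subgraph of `G` induced by `S`. Its values outside `S`
are irrelevant, so that partial colorings are total functions. -/
def IsLColoringOn (G : SimpleGraph V) (L : V → Finset α) (S : Set V) (φ : V → α) : Prop :=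
  (∀ v ∈ S, φ v ∈ L v) ∧ ∀ u ∈ S, ∀ w ∈ S, G.Adj u w → φ u ≠ φ w

lemma IsLColoringOn.mono {S T : Set V} {φ : V → α} (hST : S ⊆ T) (hφ : IsLColoringOn G L T φ) :
    IsLColoringOn G L S φ :=
  ⟨fun v hv ↦ hφ.1 v (hST hv), fun u hu w hw ↦ hφ.2 u (hST hu) w (hST hw)⟩

lemma exists_isLColoringOn_univ_of_forall_finset {D : Finset V} {Q : (V → α) → Prop}
    (hQ : DependsOn Q D) (h : ∀ S : Finset V, ∃ φ, IsLColoringOn G L S φ ∧ Q φ) :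
    ∃ φ, IsLColoringOn G L Set.univ φ ∧ Q φ := by
  classical
  choose ψ hψ hQψ using h
  obtain ⟨χ, hχ⟩ := rado_selection_subtype (β := fun v ↦ L v)
    fun S v ↦ ⟨ψ S v, (hψ S).1 v v.2⟩
  have agree (S : Finset V) : ∃ T, S ⊆ T ∧ ∀ v ∈ S, (χ v : α) = ψ T v := by
    obtain ⟨T, hST, hT⟩ := hχ S
    exact ⟨T, hST, fun v hv ↦ congrArg Subtype.val (hT ⟨v, hv⟩)⟩
  refine ⟨fun v ↦ χ v, ⟨fun v _ ↦ (χ v).2, fun u _ w _ huw ↦ ?_⟩, ?_⟩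
  · obtain ⟨T, hT, hχT⟩ := agree {u, w}
    simpa [hχT] using (hψ T).2 u (hT (by simp)) w (hT (by simp)) huw
  · obtain ⟨T, -, hχT⟩ := agree D
    exact (hQ hχT).mpr (hQψ T)

variable [DecidableEq α] [DecidableRel G.Adj] {S : Finset V} {v : V} {φ : V → α}

/-- The colors of the list of `v` that `φ` does not use on the neighbors of `v` in `S`. -/
def freeColors (G : SimpleGraph V) [DecidableRel G.Adj] (L : V → Finset α) (S : Finset V) (v : V)
    (φ : V → α) : Finset α :=
  L v \ {u ∈ S | G.Adj v u}.image φ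

lemma mem_freeColors {c : α} :
    c ∈ freeColors G L S v φ ↔ c ∈ L v ∧ ∀ u ∈ S, G.Adj v u → φ u ≠ c := by
  simp [freeColors]

lemma card_le_card_freeColors_add :
    #(L v) ≤ #(freeColors G L S v φ) + #{u ∈ S | G.Adj v u} := by
  have hsdiff := le_card_sdiff ({u ∈ S | G.Adj v u}.image φ) (L v)
  have himage : #({u ∈ S | G.Adj v u}.image φ) ≤ #{u ∈ S | G.Adj v u} := card_image_le
  unfold freeColors
  lia

lemma IsLColoringOn.update [DecidableEq V] (hφ : IsLColoringOn G L S φ) (hv : v ∉ S) {c : α}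
    (hc : c ∈ freeColors G L S v φ) :
    IsLColoringOn G L ↑(insert v S) (Function.update φ v c) := by
  obtain ⟨hcL, hcN⟩ := mem_freeColors.1 hc
  have hself : Function.update φ v c v = c := Function.update_self ..
  have hold : ∀ u ∈ S, Function.update φ v c u = φ u := fun u hu ↦
    Function.update_of_ne (ne_of_mem_of_not_mem hu hv) ..
  simp only [IsLColoringOn, mem_coe, forall_mem_insert, hself]
  refine ⟨⟨hcL, fun u hu ↦ ?_⟩, ⟨fun h ↦ (G.irrefl h).elim, fun w hw hvw ↦ ?_⟩,
    fun u hu ↦ ⟨fun huv ↦ ?_, fun w hw huw ↦ ?_⟩⟩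
  · exact hold u hu ▸ hφ.1 u hu
  · exact hold w hw ▸ (hcN w hw hvw).symm
  · exact hold u hu ▸ hcN u hu huv.symm
  · exact hold u hu ▸ hold w hw ▸ hφ.2 u hu w hw huw

end PartialColoring

section FlexibleDistribution

variable {V α : Type*} {G : SimpleGraph V} {L : V → Finset α} {S : Finset V} {d : ℕ}
  {p : PMF (V → α)}

lemma inv_card_mul_le_toOuterMeasure_resample_freeColors [DecidableEq V] [DecidableEq α]
    [DecidableRel G.Adj] {v : V} {hA : ∀ φ, (freeColors G L S v φ).Nonempty} {c : α}
    (hc : c ∈ L v) :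
    (#(L v) : ℝ≥0∞)⁻¹ * p.toOuterMeasure {φ | ∀ u ∈ ({u ∈ S | G.Adj v u} : Finset V), φ u ≠ c} ≤
      (resample p v (freeColors G L S v) hA).toOuterMeasure {φ | φ v = c} := by
  refine mul_toOuterMeasure_le_toOuterMeasure_resample fun φ hφ ↦ ⟨{c}, ?_, ?_, by simp⟩
  · rw [singleton_subset_iff, mem_freeColors]
    exact ⟨hc, fun u hu hvu ↦ hφ u (mem_filter.2 ⟨hu, hvu⟩)⟩
  · rw [card_singleton, Nat.cast_one]
    grw [freeColors, sdiff_subset]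
    exact ENNReal.inv_mul_le_one _

/-- A probability distribution on the `L`-colorings of the subgraph of `G` induced by `S` under
which every color of every list is attained with a probability bounded below in terms of `d` and the
size of the list. The field `avoid` is the invariant that keeps this true when vertices with at most
`d` neighbors in `S` are added to `S`. -/
structure IsFlexibleDistribution (G : SimpleGraph V) (L : V → Finset α) (d : ℕ) (S : Finset V)
    (p : PMF (V → α)) : Prop where
  isLColoringOn : ∀ φ ∈ p.support, IsLColoringOn G L S φ
  avoid : ∀ W ⊆ S, ∀ c, 2⁻¹ ^ #W ≤ p.toOuterMeasure {φ | ∀ w ∈ W, φ w ≠ c}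
  attain : ∀ v ∈ S, ∀ c ∈ L v, 2⁻¹ ^ d / #(L v) ≤ p.toOuterMeasure {φ | φ v = c}

lemma isFlexibleDistribution_empty (φ : V → α) : IsFlexibleDistribution G L d ∅ (PMF.pure φ) where
  isLColoringOn := by simp [IsLColoringOn]
  avoid W hW c := by simp [subset_empty.1 hW]
  attain := by simp

lemma IsFlexibleDistribution.exists_insert [DecidableEq V] [DecidableRel G.Adj] {v : V}
    (hp : IsFlexibleDistribution G L d S p) (hv : v ∉ S) (hN : #{u ∈ S | G.Adj v u} ≤ d)
    (hL : d + 2 ≤ #(L v)) : ∃ p', IsFlexibleDistribution G L d (insert v S) p' := by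
  classical
  have htwo (φ : V → α) : 2 ≤ #(freeColors G L S v φ) := by
    have hcard := card_le_card_freeColors_add (G := G) (L := L) (S := S) (v := v) (φ := φ)
    lia
  have hne (φ : V → α) : (freeColors G L S v φ).Nonempty := card_pos.1 (two_pos.trans_le (htwo φ))
  refine ⟨resample p v (freeColors G L S v) hne, fun ψ hψ ↦ ?_, fun W hW c ↦ ?_, fun u hu c hc ↦ ?_⟩
  · obtain ⟨φ, hφ, c, hc, rfl⟩ := mem_support_resample_iff.1 hψ
    exact (hp.isLColoringOn φ hφ).update hv hc
  · exact inv_two_pow_card_le_toOuterMeasure_resample (hp.avoid _ (subset_insert_iff.1 hW) c) htwo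
  · rcases mem_insert.1 hu with rfl | hu
    · refine le_trans ?_ (inv_card_mul_le_toOuterMeasure_resample_freeColors hc)
      rw [ENNReal.div_eq_inv_mul]
      grw [← hp.avoid _ (filter_subset _ _) c]
      gcongr 1
      exact pow_le_pow_right_of_le_one' (by simp) hN
    · have hdep : DependsOn (fun φ : V → α ↦ φ u = c) {u} := fun φ ψ h ↦ by simp [h u rfl]
      exact (hp.attain u hu c hc).trans
        (toOuterMeasure_le_toOuterMeasure_resample hdep (ne_of_mem_of_not_mem hu hv).symm)

lemma Degenerate.exists_card_filter_adj_le [DecidableRel G.Adj] (hG : Degenerate G d)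
    (hS : S.Nonempty) : ∃ v ∈ S, #{u ∈ S | G.Adj v u} ≤ d := by
  obtain ⟨v, hv, hd⟩ := hG ((⊤ : G.Subgraph).induce S) (by simpa using hS)
  have hvS : v ∈ S := by simpa using hv
  have hnbr : ((⊤ : G.Subgraph).induce S).neighborSet v = ({u ∈ S | G.Adj v u} : Finset V) := by
    ext u
    simp [hvS]
  rw [hnbr, Set.ncard_coe_finset] at hd
  exact ⟨v, hvS, hd⟩

lemma Degenerate.exists_isFlexibleDistribution (hG : Degenerate G d)
    (hL : ∀ v, d + 2 ≤ #(L v)) (S : Finset V) : ∃ p, IsFlexibleDistribution G L d S p := by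
  classical
  induction S using Finset.strongInduction with
  | H S ih =>
    rcases S.eq_empty_or_nonempty with rfl | hS
    · have hne (v : V) : (L v).Nonempty := card_pos.1 (by have := hL v; lia)
      exact ⟨_, isFlexibleDistribution_empty fun v ↦ (hne v).choose⟩
    · obtain ⟨v, hv, hd⟩ := hG.exists_card_filter_adj_le hS
      obtain ⟨p, hp⟩ := ih (S.erase v) (erase_ssubset hv)
      have hN : #{u ∈ S.erase v | G.Adj v u} ≤ d :=
        (card_le_card (filter_subset_filter _ (erase_subset v S))).trans hd
      simpa [hv] using hp.exists_insert (notMem_erase v S) hN (hL v)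

end FlexibleDistribution

section Flexibility

variable {V α : Type*} {G : SimpleGraph V} {L : V → Finset α} {D : Finset V} {r : V → α}

lemma exists_forall_subset_card_eq {k : ℕ} (hk : 1 ≤ k) (hL : ∀ v, k ≤ #(L v))
    (hr : ∀ v ∈ D, r v ∈ L v) :
    ∃ L' : V → Finset α, (∀ v, L' v ⊆ L v) ∧ (∀ v, #(L' v) = k) ∧ ∀ v ∈ D, r v ∈ L' v := by
  classical
  have htrim (v : V) : ∃ T, L v ∩ {r v} ⊆ T ∧ T ⊆ L v ∧ #T = k :=
    exists_subsuperset_card_eq inter_subset_left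
      ((card_le_card inter_subset_right).trans ((card_singleton _).trans_le hk)) (hL v)
  choose L' hrL' hL' hcard using htrim
  exact ⟨L', hL', hcard, fun v hv ↦ hrL' v (by simp [hr v hv])⟩

lemma Degenerate.exists_isLColoringOn_mul_card_le [DecidableEq α] {d : ℕ} (hG : Degenerate G d)
    (hL : ∀ v, #(L v) = d + 2) (hr : ∀ v ∈ D, r v ∈ L v) (S : Finset V) :
    ∃ φ, IsLColoringOn G L S φ ∧ (1 / 2 : ℝ) ^ d / (d + 2) * #D ≤ #{v ∈ D | φ v = r v} := by
  classical
  obtain ⟨p, hp⟩ := hG.exists_isFlexibleDistribution (fun v ↦ (hL v).ge) (S ∪ D)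
  have hattain : ∀ v ∈ D, (2⁻¹ ^ d / ↑(d + 2) : ℝ≥0∞) ≤ p.toOuterMeasure {φ | φ v = r v} :=
    fun v hv ↦ hL v ▸ hp.attain v (mem_union_right S hv) (r v) (hr v hv)
  obtain ⟨φ, hφ, hcard⟩ := exists_mem_support_mul_card_le (by finiteness) hattain
  refine ⟨φ, (hp.isLColoringOn φ hφ).mono (by simp), ?_⟩
  have hreal := ENNReal.toReal_mono (ENNReal.natCast_ne_top _) hcard
  simpa [ENNReal.toReal_add] using hreal

-- Since `Set.ncard` is `0` on infinite sets, a vertex of infinite degree in a subgraph meets the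
-- bound of `Degenerate`.
theorem stmt0_general {V : Type*} {G : SimpleGraph V} {L : V → Finset ℕ} {d : ℕ}
    (hG : Degenerate G d) (hL : ∀ v, d + 2 ≤ #(L v)) :
    Flexible G L ((1 / 2) ^ d / (d + 2)) := by
  intro D r hr
  obtain ⟨L', hL', hcard, hrL'⟩ := exists_forall_subset_card_eq (by lia) hL hr
  have hdep : DependsOn
      (fun φ : V → ℕ ↦ (1 / 2 : ℝ) ^ d / (d + 2) * #D ≤ #{v ∈ D | φ v = r v}) D := fun φ ψ h ↦ by
    simp only [filter_congr fun v hv ↦ show φ v = r v ↔ ψ v = r v by rw [h v hv]]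
  obtain ⟨φ, ⟨hφL, hφG⟩, hφD⟩ := exists_isLColoringOn_univ_of_forall_finset hdep
    (hG.exists_isLColoringOn_mul_card_le hcard hrL')
  exact ⟨φ, ⟨fun v ↦ hL' v (hφL v trivial), fun u w ↦ hφG u trivial w trivial⟩, hφD⟩

end Flexibility

theorem stmt0 (d : ℕ) :
    ∃ ε : ℝ, 0 < ε ∧
      ∀ (V : Type) [Fintype V] (G : SimpleGraph V) (L : V → Finset ℕ),
        Degenerate G d → (∀ v, d + 2 ≤ (L v).card) → Flexible G L ε :=
  ⟨(1 / 2) ^ d / (d + 2), by positivity, fun _ _ _ _ hG hL ↦ stmt0_general hG hL⟩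
end

section
/- Let d ≥ 2 be an integer such that d+1 is a prime. Let G be a finite d-degenerate graph with a list assignment L such that |L(v)| ≥ d+1 for all vertices v. Then every request r for G and L with |dom(r)| = 1 is 1-satisfiable; that is, for every vertex u ∈ V(G) and every color c ∈ L(u), there exists an L-coloring φ of G with φ(u) = c. -/
/-!
Let `q = d + 1 = p ^ k`. Order the vertices so that each has at most `d` later neighbours, and
orient every edge towards its later end. In the graph polynomial `∏ (X a - X b)` the vector of
outdegrees, whose entries are all below `q`, then has coefficient `1`. The polynomial is
invariant under the substitution `X v ↦ X v - X u`, which kills `X u` and, over `ZMod p`, maps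
`X v ^ q` into the ideal generated by the `q`-th powers of the variables. Hence the polynomial also
has a nonzero coefficient modulo `p` at an exponent vector `t` with all entries below `q` and
`t u = 0`. The Combinatorial Nullstellensatz at `t` needs only one color at `u` and `q` colors at
every other vertex.
-/

open MvPolynomial

section TranslationInvariance

variable {σ R : Type*} [CommRing R]

theorem mem_span_range_X_pow_iff {f : MvPolynomial σ R} (n : σ → ℕ) :
    f ∈ Ideal.span (Set.range fun i => (X i : MvPolynomial σ R) ^ n i) ↔
      ∀ t ∈ f.support, ∃ i, n i ≤ t i := by
  have hrange : (Set.range fun i => (X i : MvPolynomial σ R) ^ n i) =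
      (fun s => monomial s 1) '' Set.range fun i => Finsupp.single i (n i) := by
    rw [← Set.range_comp]
    exact congrArg Set.range (funext fun i => X_pow_eq_monomial)
  simp only [hrange, mem_ideal_span_monomial_image, Set.exists_range_iff, Finsupp.single_le_iff]

theorem exists_mem_support_apply_eq_zero (p k : ℕ) [ExpChar R p] {f : MvPolynomial σ R} {u : σ}
    (hf : aeval (fun i => (X i - X u : MvPolynomial σ R)) f = f)
    (h : ∃ t ∈ f.support, ∀ i, t i < p ^ k) :
    ∃ t ∈ f.support, t u = 0 ∧ ∀ i, t i < p ^ k := by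
  classical
  let τ : MvPolynomial σ R →ₐ[R] MvPolynomial σ R := aeval fun i => X i - X u
  let I : Ideal (MvPolynomial σ R) := Ideal.span (Set.range fun i => X i ^ p ^ k)
  let n : σ → ℕ := Function.update (fun _ => p ^ k) u 1
  by_contra! hcon
  have hfJ : f ∈ Ideal.span (Set.range fun i => (X i : MvPolynomial σ R) ^ n i) := by
    refine (mem_span_range_X_pow_iff n).2 fun t ht => ?_
    by_cases htu : t u = 0
    · obtain ⟨i, hi⟩ := hcon t ht htu
      have hiu : i ≠ u := by
        rintro rfl
        have : 0 < p ^ k := pow_pos (expChar_pos R p) k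
        omega
      exact ⟨i, by simpa [n, hiu] using hi⟩
    · exact ⟨u, by simpa [n] using Nat.one_le_iff_ne_zero.2 htu⟩
  have hτ : Ideal.span (Set.range fun i => (X i : MvPolynomial σ R) ^ n i) ≤ I.comap τ := by
    rw [Ideal.span_le]
    rintro _ ⟨i, rfl⟩
    change τ (X i ^ n i) ∈ I
    obtain rfl | hiu := eq_or_ne i u
    · simp [τ, n]
    · have hτX : τ (X i ^ n i) = X i ^ p ^ k - X u ^ p ^ k := by
        simp [τ, n, hiu, sub_pow_expChar_pow]
      rw [hτX]
      exact I.sub_mem (Ideal.subset_span ⟨i, rfl⟩) (Ideal.subset_span ⟨u, rfl⟩)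
  have hfI : f ∈ I := by simpa only [Ideal.mem_comap, τ, hf] using hτ hfJ
  obtain ⟨t, ht, hlt⟩ := h
  obtain ⟨i, hi⟩ := (mem_span_range_X_pow_iff _).1 hfI t ht
  exact (hlt i).not_ge hi

end TranslationInvariance

section GraphPolynomial

variable {V : Type*} (R : Type*) [CommRing R]

/-- The graph polynomial of Alon and Tarsi, whose nonvanishing at a point says that the point is a
proper coloring. The graph is given by a set `E` of ordered pairs, one for each edge; reorienting an
edge only changes the sign. -/
noncomputable def graphPolynomial (E : Finset (V × V)) : MvPolynomial V R :=
  ∏ e ∈ E, (X e.1 - X e.2)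

theorem map_graphPolynomial {S : Type*} [CommRing S] (g : R →+* S) (E : Finset (V × V)) :
    map g (graphPolynomial R E) = graphPolynomial S E := by
  simp [graphPolynomial, map_prod]

theorem aeval_X_sub_graphPolynomial (f : MvPolynomial V R) (E : Finset (V × V)) :
    aeval (fun v => X v - f) (graphPolynomial R E) = graphPolynomial R E := by
  simp [graphPolynomial, map_prod]

theorem isHomogeneous_graphPolynomial (E : Finset (V × V)) :
    (graphPolynomial R E).IsHomogeneous E.card := by
  rw [Finset.card_eq_sum_ones]
  exact IsHomogeneous.prod _ _ _ fun e _ => (isHomogeneous_X R e.1).sub (isHomogeneous_X R e.2)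

theorem coeff_graphPolynomial_sum_single [Finite V] [LinearOrder V] {E : Finset (V × V)}
    (hE : ∀ e ∈ E, e.1 < e.2) :
    coeff (∑ e ∈ E, Finsupp.single e.1 1) (graphPolynomial R E) = 1 := by
  nontriviality R
  let m : MonomialOrder V := MonomialOrder.lex
  have hlt : ∀ e ∈ E, m.toSyn (m.degree (X e.2 : MvPolynomial V R)) <
      m.toSyn (m.degree (X e.1 : MvPolynomial V R)) := by
    intro e he
    rw [MonomialOrder.degree_X, MonomialOrder.degree_X, MonomialOrder.lex_lt_iff]
    exact Finsupp.Lex.single_lt_iff.2 (hE e he)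
  have hdegree : ∀ e ∈ E, m.degree (X e.1 - X e.2 : MvPolynomial V R) = Finsupp.single e.1 1 :=
    fun e he => by rw [m.degree_sub_of_lt (hlt e he), MonomialOrder.degree_X]
  rw [← Finset.sum_congr rfl hdegree, graphPolynomial, m.coeff_prod_sum_degree]
  refine Finset.prod_eq_one fun e he => ?_
  rw [m.leadingCoeff_sub_of_lt (hlt e he), MonomialOrder.leadingCoeff_X]

theorem exists_mem_support_graphPolynomial_lt [Finite V] [LinearOrder V] [Nontrivial R]
    {E : Finset (V × V)} (hE : ∀ e ∈ E, e.1 < e.2) {q : ℕ}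
    (hout : ∀ v, {w | (v, w) ∈ E}.ncard < q) :
    ∃ t ∈ (graphPolynomial R E).support, ∀ v, t v < q := by
  classical
  refine ⟨∑ e ∈ E, Finsupp.single e.1 1, ?_, fun v => lt_of_eq_of_lt ?_ (hout v)⟩
  · rw [mem_support_iff, coeff_graphPolynomial_sum_single R hE]
    exact one_ne_zero
  · have himage : (E.filter fun e => e.1 = v : Set (V × V)) = Prod.mk v '' {w | (v, w) ∈ E} := by
      ext ⟨a, b⟩
      simp only [Finset.coe_filter, Set.mem_ofPred_eq, Set.mem_image, Prod.mk.injEq]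
      grind
    rw [← Set.ncard_image_of_injective _ (Prod.mk_right_injective v), ← himage,
      Set.ncard_coe_finset]
    simp [Finsupp.finsetSum_apply, Finsupp.single_apply]

end GraphPolynomial

section ListColoring

variable {V α : Type*} [Finite V]

theorem exists_forall_mem_of_coeff_graphPolynomial_ne_zero {R : Type*} [CommRing R]
    {E : Finset (V × V)} {t : V →₀ ℕ} (ht : coeff t (graphPolynomial R E) ≠ 0)
    (L : V → Finset α) (hL : ∀ v, t v < (L v).card) :
    ∃ φ : V → α, (∀ v, φ v ∈ L v) ∧ ∀ e ∈ E, φ e.1 ≠ φ e.2 := by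
  classical
  have ht_int : coeff t (graphPolynomial ℤ E) ≠ 0 := by
    intro h
    rw [← map_graphPolynomial ℤ (Int.castRingHom R), coeff_map, h, map_zero] at ht
    exact ht rfl
  have htotal : (graphPolynomial ℤ E).totalDegree = t.degree := by
    have hhom := isHomogeneous_graphPolynomial ℤ E
    rw [hhom.totalDegree (ne_zero_iff.2 ⟨t, ht_int⟩)]
    exact (not_imp_comm.1 hhom.coeff_eq_zero ht_int).symm
  obtain ⟨ι, hι⟩ := Set.countable_iff_exists_injOn.1
    (Set.finite_iUnion fun v => (L v).finite_toSet).countable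
  have hcard (v : V) : ((L v).image fun a => (ι a : ℤ)).card = (L v).card :=
    Finset.card_image_of_injOn
      (Nat.cast_injective.comp_injOn (hι.mono (Set.subset_iUnion (fun v => (L v : Set α)) v)))
  obtain ⟨x, hx, hx_ne⟩ := combinatorial_nullstellensatz_exists_eval_nonzero (graphPolynomial ℤ E)
    t ht_int htotal (fun v => (L v).image fun a => (ι a : ℤ)) fun v => by rw [hcard]; exact hL v
  choose φ hφ hφx using fun v => Finset.mem_image.1 (hx v)
  refine ⟨φ, hφ, fun e he heq => hx_ne ?_⟩
  rw [graphPolynomial, map_prod]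
  exact Finset.prod_eq_zero he (by simp [← hφx, heq])

theorem exists_forall_mem_of_outdegree_lt_prime_pow [LinearOrder V] {p : ℕ} (hp : p.Prime) (k : ℕ)
    {E : Finset (V × V)} (hE : ∀ e ∈ E, e.1 < e.2)
    (hout : ∀ v, {w | (v, w) ∈ E}.ncard < p ^ k) (L : V → Finset α) {u : V}
    (hu : (L u).Nonempty) (hL : ∀ v ≠ u, p ^ k ≤ (L v).card) :
    ∃ φ : V → α, (∀ v, φ v ∈ L v) ∧ ∀ e ∈ E, φ e.1 ≠ φ e.2 := by
  have : Fact p.Prime := ⟨hp⟩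
  obtain ⟨t, ht, htu, hlt⟩ := exists_mem_support_apply_eq_zero p k
    (aeval_X_sub_graphPolynomial (ZMod p) (X u) E)
    (exists_mem_support_graphPolynomial_lt (ZMod p) hE hout)
  refine exists_forall_mem_of_coeff_graphPolynomial_ne_zero (mem_support_iff.1 ht) L fun v => ?_
  obtain rfl | hvu := eq_or_ne v u
  · rw [htu]
    exact hu.card_pos
  · exact (hlt v).trans_le (hL v hvu)

end ListColoring

section Degeneracy

variable {V : Type*} {G : SimpleGraph V} {d : ℕ}

theorem Degenerate.exists_mem_ncard_adj_le (hG : Degenerate G d) {S : Set V} (hS : S.Nonempty) :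
    ∃ v ∈ S, {w | w ∈ S ∧ G.Adj v w}.ncard ≤ d := by
  obtain ⟨v, hv, hvd⟩ := hG ((⊤ : G.Subgraph).induce S) hS
  refine ⟨v, hv, ?_⟩
  convert hvd using 2
  ext w
  simp [show v ∈ S from hv]

theorem Degenerate.exists_injOn_ncard_le (hG : Degenerate G d) (S : Finset V) :
    ∃ f : V → ℕ, Set.InjOn f S ∧ ∀ a ∈ S, {b | b ∈ S ∧ G.Adj a b ∧ f a < f b}.ncard ≤ d := by
  classical
  induction S using Finset.eraseInduction with
  | H S ih =>
    obtain rfl | hS := S.eq_empty_or_nonempty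
    · exact ⟨fun _ => 0, by simp, by simp⟩
    obtain ⟨v, hv, hvd⟩ := hG.exists_mem_ncard_adj_le (S := S) hS
    obtain ⟨f, hf, hfd⟩ := ih v hv
    refine ⟨fun b => if b = v then 0 else f b + 1, fun a ha b hb hab => ?_, fun a ha => ?_⟩
    · have := @hf a
      grind
    obtain rfl | hav := eq_or_ne a v
    · refine le_trans (Set.ncard_le_ncard ?_ (S.finite_toSet.subset fun b hb => hb.1)) hvd
      exact fun b hb => ⟨hb.1, hb.2.1⟩
    · refine le_trans (Set.ncard_le_ncard (fun b hb => ?_)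
        ((S.erase v).finite_toSet.subset fun b hb => hb.1)) (hfd a (Finset.mem_erase.2 ⟨hav, ha⟩))
      grind

theorem Degenerate.exists_linearOrder_ncard_le [Finite V] (hG : Degenerate G d) :
    ∃ _ : LinearOrder V, ∀ a, {b | G.Adj a b ∧ a < b}.ncard ≤ d := by
  have := Fintype.ofFinite V
  obtain ⟨f, hf, hfd⟩ := hG.exists_injOn_ncard_le Finset.univ
  have hinj : Function.Injective f := by simpa using hf
  simp only [Finset.mem_univ, true_and, forall_const] at hfd
  exact ⟨LinearOrder.lift' f hinj, hfd⟩

end Degeneracy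

theorem stmt5_general {V α : Type*} [Finite V] {d : ℕ} (hd : IsPrimePow (d + 1))
    {G : SimpleGraph V} (hG : Degenerate G d) (L : V → Finset α) {u : V} {c : α} (hc : c ∈ L u)
    (hL : ∀ v ≠ u, d + 1 ≤ (L v).card) :
    ∃ φ : G.Coloring α, (∀ v, φ v ∈ L v) ∧ φ u = c := by
  classical
  obtain ⟨p, k, hp, -, hpk⟩ := (isPrimePow_nat_iff _).1 hd
  obtain ⟨_, hout⟩ := hG.exists_linearOrder_ncard_le
  let E : Finset (V × V) := (Set.toFinite {e : V × V | G.Adj e.1 e.2 ∧ e.1 < e.2}).toFinset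
  obtain ⟨φ, hφ, hφE⟩ := exists_forall_mem_of_outdegree_lt_prime_pow hp k (E := E) (u := u)
    (by simp [E]) (by simpa [E, hpk, Nat.lt_succ_iff] using hout) (Function.update L u {c})
    (by simp) (fun v hv => by simpa [hpk, hv] using hL v hv)
  have hφu : φ u = c := by simpa using hφ u
  have hne {a b : V} (hab : G.Adj a b) (hlt : a < b) : φ a ≠ φ b :=
    hφE (a, b) (by simp [E, hab, hlt])
  have hφL (v : V) : φ v ∈ L v := by
    obtain rfl | hvu := eq_or_ne v u
    · rwa [hφu]
    · simpa [hvu] using hφ v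
  exact ⟨.mk φ fun hab => hab.ne.lt_or_gt.elim (hne hab) fun hlt => (hne hab.symm hlt).symm,
    hφL, hφu⟩

theorem stmt5 {V : Type*} [Fintype V] (d : ℕ) (hd : 2 ≤ d) (hp : Nat.Prime (d + 1))
    (G : SimpleGraph V) (hdeg : Degenerate G d) (L : V → Finset ℕ)
    (hL : ∀ v, d + 1 ≤ (L v).card) (u : V) (c : ℕ) (hc : c ∈ L u) :
    ∃ φ : V → ℕ, IsLColoring G L φ ∧ φ u = c := by
  obtain ⟨φ, hφ, hφu⟩ := stmt5_general hp.isPrimePow hdeg L hc fun v _ => hL v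
  exact ⟨φ, ⟨hφ, fun _ _ hab => φ.valid hab⟩, hφu⟩
end

section
/- Let s_1, …, s_n and t be positive integers. There exists a finite graph G with a list assignment L in which every list has size three, and distinct vertices v_1, …, v_n of G (let S = {v_1, …, v_n}), such that: (1) |V(G)| < 11n(t+2); (2) a set R ⊆ {1,…,n} is S-realizable if and only if Σ_{i∈R} s_i ≤ t; and (3) every weighted request w for G and L satisfying w(v,1) = 0 for all v ∈ S is 1/4-satisfiable. -/
def WeightTotal {V : Type*} [Fintype V] (L : V → Finset ℕ) (w : V → ℕ → ℝ) : ℝ :=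
  ∑ v, ∑ c ∈ L v, w v c

def WEpsSat {V : Type*} [Fintype V] (G : SimpleGraph V) (L : V → Finset ℕ)
    (w : V → ℕ → ℝ) (ε : ℝ) : Prop :=
  ∃ φ : V → ℕ, IsLColoring G L φ ∧ ε * WeightTotal L w ≤ ∑ v, w v (φ v)

def WFlexible {V : Type*} [Fintype V] (G : SimpleGraph V) (L : V → Finset ℕ) (ε : ℝ) : Prop :=
  ∀ w : V → ℕ → ℝ, (∀ v c, 0 ≤ w v c) → WEpsSat G L w ε

/-!
The realizable sets are read off a system of Horn clauses. A clause `u ∧ v → h` is encoded by a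
triangle formed by `h` and two auxiliary vertices, joined to `u` and `v` respectively: the triangle
has only three colors available, one of them being `1`, so when `u` and `v` both have color `1`,
only `h` can have color `1`. The clauses for the knapsack problem propagate the partial sums of `R`,
capped at `t + 1`, and forbid reaching `t + 1`.

A clause has its head at a higher level than its body, and lists of different levels share only the
color `1`. Hence rotating each triangle through its three colors gives three proper colorings under
which every vertex meets its whole list, except that the vertices in `S` avoid color `1`; one of the
three satisfies a third of any request.
-/

section WeightedRequests

variable {V W : Type*} {G : SimpleGraph V} {L : V → Finset ℕ}

lemma isLColoring_comap_equiv_iff (e : W ≃ V) {φ : V → ℕ} :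
    IsLColoring (G.comap e) (fun x ↦ L (e x)) (fun x ↦ φ (e x)) ↔ IsLColoring G L φ := by
  simp only [IsLColoring, SimpleGraph.comap_adj, e.forall_congr_left, e.apply_symm_apply]

lemma exists_isLColoring_comap_equiv_iff (e : W ≃ V) {p : (V → ℕ) → Prop} :
    (∃ φ, IsLColoring (G.comap e) (fun x ↦ L (e x)) φ ∧ p fun v ↦ φ (e.symm v)) ↔
      ∃ φ, IsLColoring G L φ ∧ p φ :=
  (e.arrowCongr (Equiv.refl ℕ)).exists_congr fun φ ↦
    and_congr_left' <| by
      convert isLColoring_comap_equiv_iff e (φ := fun v ↦ φ (e.symm v))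
      · rw [e.symm_apply_apply]
      · rfl

variable [Fintype V] {w : V → ℕ → ℝ}

lemma WEpsSat.mono {δ ε : ℝ} (hw : ∀ v c, 0 ≤ w v c) (hδε : δ ≤ ε) (h : WEpsSat G L w ε) :
    WEpsSat G L w δ := by
  obtain ⟨φ, hφ, hsat⟩ := h
  have htotal : 0 ≤ WeightTotal L w :=
    Finset.sum_nonneg fun v _ ↦ Finset.sum_nonneg fun c _ ↦ hw v c
  exact ⟨φ, hφ, (mul_le_mul_of_nonneg_right hδε htotal).trans hsat⟩

lemma WEpsSat.comap_equiv [Fintype W] (e : W ≃ V) {ε : ℝ} (h : WEpsSat G L w ε) :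
    WEpsSat (G.comap e) (fun x ↦ L (e x)) (fun x ↦ w (e x)) ε := by
  obtain ⟨φ, hφ, hsat⟩ := h
  refine ⟨fun x ↦ φ (e x), (isLColoring_comap_equiv_iff e).2 hφ, ?_⟩
  rwa [WeightTotal, e.sum_comp fun v ↦ ∑ c ∈ L v, w v c, e.sum_comp fun v ↦ w v (φ v)]

lemma wEpsSat_one_div_card {ι : Type*} [Fintype ι] [Nonempty ι] (φ : ι → V → ℕ)
    (hφ : ∀ j, IsLColoring G L (φ j)) (hw : ∀ v, ∑ c ∈ L v, w v c ≤ ∑ j, w v (φ j v)) :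
    WEpsSat G L w (1 / Fintype.card ι) := by
  have hsum : ∑ _j : ι, 1 / Fintype.card ι * WeightTotal L w ≤ ∑ j, ∑ v, w v (φ j v) := calc
    _ = WeightTotal L w := by simp
    _ ≤ ∑ v, ∑ j, w v (φ j v) := Finset.sum_le_sum fun v _ ↦ hw v
    _ = _ := Finset.sum_comm
  obtain ⟨j, -, hj⟩ := Finset.exists_le_of_sum_le Finset.univ_nonempty hsum
  exact ⟨φ j, hφ j, hj⟩

end WeightedRequests

section Palettes

/-- The three colors available at level `ℓ`. Color `1` is common to all levels, and no other color
occurs at two levels. -/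
def hue (ℓ : ℕ) : Fin 3 → ℕ := ![1, 2 * ℓ + 2, 2 * ℓ + 3]

lemma hue_eq_hue_iff {ℓ m : ℕ} {a b : Fin 3} :
    hue ℓ a = hue m b ↔ a = b ∧ (a = 0 ∨ ℓ = m) := by
  fin_cases a <;> fin_cases b <;> simp [hue] <;> omega

lemma hue_injective (ℓ : ℕ) : Function.Injective (hue ℓ) :=
  fun _ _ h ↦ (hue_eq_hue_iff.1 h).1

/-- The list shared by all vertices of level `ℓ` in the graph of a Horn system. -/
def palette (ℓ : ℕ) : Finset ℕ := Finset.univ.image (hue ℓ)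

lemma card_palette (ℓ : ℕ) : (palette ℓ).card = 3 := by
  rw [palette, Finset.card_image_of_injective _ (hue_injective ℓ), Finset.card_fin]

lemma hue_mem_palette (ℓ : ℕ) (a : Fin 3) : hue ℓ a ∈ palette ℓ :=
  Finset.mem_image_of_mem _ (Finset.mem_univ a)

lemma hue_eq_one_iff {ℓ : ℕ} {a : Fin 3} : hue ℓ a = 1 ↔ a = 0 :=
  (hue_injective ℓ).eq_iff (b := 0)

lemma sum_palette (ℓ : ℕ) (w : ℕ → ℝ) : ∑ c ∈ palette ℓ, w c = ∑ a, w (hue ℓ a) :=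
  Finset.sum_image (hue_injective ℓ).injOn

end Palettes

/-- A system of Horn clauses over the variables `X`: for each `g : Γ` the definite clause
`body g true ∧ body g false → head g`, and for each conflicting pair the clause forbidding both of
its members. The variables are stratified by `level`, those of level `0` being the inputs. -/
structure HornSystem (X Γ : Type*) where
  level : X → ℕ
  body : Γ → Bool → X
  head : Γ → X
  Conflict : X → X → Prop
  level_body_lt : ∀ g b, level (body g b) < level (head g)
  level_eq_zero_of_conflict : ∀ {x y}, Conflict x y → level x = 0
  level_pos_of_conflict : ∀ {x y}, Conflict x y → 0 < level y

namespace HornSystem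

variable {X Γ : Type*} (H : HornSystem X Γ)

/-- The clauses of `H` hold when `T` is the set of true variables. -/
def IsModel (T : Set X) : Prop :=
  (∀ g, (∀ b, H.body g b ∈ T) → H.head g ∈ T) ∧ ∀ x y, H.Conflict x y → x ∈ T → y ∉ T

/-- The edges, in one direction, of the graph encoding `H`. Its vertices are the variables and, for
each clause `g`, two auxiliary vertices `(g, true)` and `(g, false)`, which form a triangle with the
head of `g` and are each joined to one variable of its body. -/
inductive Link : X ⊕ Γ × Bool → X ⊕ Γ × Bool → Prop
  | conflict {x y : X} : H.Conflict x y → Link (.inl x) (.inl y)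
  | pair (g : Γ) : Link (.inr (g, true)) (.inr (g, false))
  | head (g : Γ) (b : Bool) : Link (.inl (H.head g)) (.inr (g, b))
  | body (g : Γ) (b : Bool) : Link (.inl (H.body g b)) (.inr (g, b))

/-- The graph whose list colorings encode the models of `H`, with color `1` standing for truth. -/
def graph : SimpleGraph (X ⊕ Γ × Bool) := SimpleGraph.fromRel H.Link

/-- The level of a vertex of `H.graph`, an auxiliary vertex having the level of the head of its
clause. -/
def vertexLevel : X ⊕ Γ × Bool → ℕ := Sum.elim H.level fun p ↦ H.level (H.head p.1)

/-- The list assignment of `H.graph`. -/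
def lists (v : X ⊕ Γ × Bool) : Finset ℕ := palette (H.vertexLevel v)

/-- The assignment of colors that picks the color number `f v` in the list of each vertex `v`. -/
def shade (f : X ⊕ Γ × Bool → Fin 3) (v : X ⊕ Γ × Bool) : ℕ :=
  hue (H.vertexLevel v) (f v)

variable {H}

lemma Link.ne {u v : X ⊕ Γ × Bool} (h : H.Link u v) : u ≠ v := by
  cases h with
  | conflict h =>
    rintro ⟨⟩
    exact (H.level_pos_of_conflict h).ne' (H.level_eq_zero_of_conflict h)
  | _ => simp

lemma isLColoring_iff_link {φ : X ⊕ Γ × Bool → ℕ} :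
    IsLColoring H.graph H.lists φ ↔
      (∀ v, φ v ∈ H.lists v) ∧ ∀ u v, H.Link u v → φ u ≠ φ v := by
  refine and_congr_right fun _ ↦ ⟨fun h u v huv ↦ h ⟨huv.ne, .inl huv⟩, ?_⟩
  rintro h u v ⟨-, huv | hvu⟩
  exacts [h u v huv, (h v u hvu).symm]

lemma isLColoring_shade_iff {f : X ⊕ Γ × Bool → Fin 3} :
    IsLColoring H.graph H.lists (H.shade f) ↔
      (∀ x y, H.Conflict x y → f (.inl x) = 0 → f (.inl y) ≠ 0) ∧
      (∀ g, f (.inr (g, true)) ≠ f (.inr (g, false))) ∧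
      (∀ g b, f (.inl (H.head g)) ≠ f (.inr (g, b))) ∧
      ∀ g b, f (.inl (H.body g b)) = 0 → f (.inr (g, b)) ≠ 0 := by
  have hmem : ∀ v, H.shade f v ∈ H.lists v := fun v ↦ hue_mem_palette _ _
  have hne (u v) : H.shade f u ≠ H.shade f v ↔
      ¬(f u = f v ∧ (f u = 0 ∨ H.vertexLevel u = H.vertexLevel v)) := hue_eq_hue_iff.not
  have hconflict {x y} (h : H.Conflict x y) : H.level x ≠ H.level y :=
    (H.level_eq_zero_of_conflict h).trans_lt (H.level_pos_of_conflict h) |>.ne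
  have hbody (g b) : H.level (H.body g b) ≠ H.level (H.head g) := (H.level_body_lt g b).ne
  rw [isLColoring_iff_link, and_iff_right hmem]
  simp only [hne]
  constructor
  · exact fun h ↦ ⟨fun x y hxy hx hy ↦ h _ _ (.conflict hxy) ⟨hx.trans hy.symm, .inl hx⟩,
      fun g hg ↦ h _ _ (.pair g) ⟨hg, .inr rfl⟩,
      fun g b hg ↦ h _ _ (.head g b) ⟨hg, .inr rfl⟩,
      fun g b hb hg ↦ h _ _ (.body g b) ⟨hb.trans hg.symm, .inl hb⟩⟩
  · rintro ⟨h_conflict, h_pair, h_head, h_body⟩ u v (hxy | g | ⟨g, b⟩ | ⟨g, b⟩) ⟨heq, h0 | hlevel⟩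
    · exact h_conflict _ _ hxy h0 (heq ▸ h0)
    · exact hconflict hxy hlevel
    · exact h_pair g heq
    · exact h_pair g heq
    · exact h_head g b heq
    · exact h_head g b heq
    · exact h_body g b h0 (heq ▸ h0)
    · exact hbody g b hlevel

lemma exists_shade_eq {φ : X ⊕ Γ × Bool → ℕ} (hφ : ∀ v, φ v ∈ H.lists v) :
    ∃ f, H.shade f = φ := by
  have (v : X ⊕ Γ × Bool) : ∃ a, hue (H.vertexLevel v) a = φ v := by
    simpa [lists, palette] using hφ v
  choose f hf using this
  exact ⟨f, funext hf⟩

open Classical in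
/-- The color numbers of a coloring encoding the model `T`. In the triangle of a clause with a
false head, color `1` goes to an auxiliary vertex joined to a false variable. -/
noncomputable def modelShade (H : HornSystem X Γ) (T : Set X) : X ⊕ Γ × Bool → Fin 3
  | .inl x => if x ∈ T then 0 else 1
  | .inr (g, true) => if H.head g ∈ T then 1 else if H.body g true ∈ T then 2 else 0
  | .inr (g, false) => if H.head g ∈ T then 2 else if H.body g true ∈ T then 0 else 2

lemma modelShade_inl_eq_zero_iff {T : Set X} {x : X} :
    H.modelShade T (.inl x) = 0 ↔ x ∈ T := by
  simp [modelShade]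

lemma IsModel.isLColoring {T : Set X} (hT : H.IsModel T) :
    IsLColoring H.graph H.lists (H.shade (H.modelShade T)) := by
  rw [isLColoring_shade_iff]
  simp only [modelShade_inl_eq_zero_iff, ne_eq]
  refine ⟨hT.2, fun g ↦ ?_, fun g b ↦ ?_, fun g b hb ↦ ?_⟩
  · simp only [modelShade]
    split_ifs <;> decide
  · cases b <;> simp only [modelShade] <;> split_ifs <;> decide
  · have hhead := hT.1 g
    rw [Bool.forall_bool] at hhead
    cases b <;> simp only [modelShade] <;> split_ifs <;> simp_all

lemma isModel_of_isLColoring {φ : X ⊕ Γ × Bool → ℕ} (hφ : IsLColoring H.graph H.lists φ) :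
    H.IsModel {x | φ (.inl x) = 1} := by
  obtain ⟨f, rfl⟩ := exists_shade_eq hφ.1
  obtain ⟨h_conflict, h_pair, h_head, h_body⟩ := isLColoring_shade_iff.1 hφ
  have third_eq_zero : ∀ a b c : Fin 3, a ≠ b → c ≠ a → c ≠ b → a ≠ 0 → b ≠ 0 → c = 0 := by
    decide
  simp only [IsModel, Set.mem_ofPred_eq, shade, hue_eq_one_iff]
  exact ⟨fun g hg ↦ third_eq_zero _ _ _ (h_pair g) (h_head g true) (h_head g false)
    (h_body g true (hg true)) (h_body g false (hg false)), h_conflict⟩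

theorem exists_isLColoring_iff_exists_isModel {ι : Type*} (v : ι → X) (p : ι → Prop) :
    (∃ φ, IsLColoring H.graph H.lists φ ∧ ∀ i, φ (.inl (v i)) = 1 ↔ p i) ↔
      ∃ T, H.IsModel T ∧ ∀ i, v i ∈ T ↔ p i := by
  constructor
  · rintro ⟨φ, hφ, hp⟩
    exact ⟨_, isModel_of_isLColoring hφ, hp⟩
  · rintro ⟨T, hT, hp⟩
    refine ⟨_, hT.isLColoring, fun i ↦ ?_⟩
    rw [shade, hue_eq_one_iff, modelShade_inl_eq_zero_iff, hp]

/-- The color numbers of the `j`-th of three colorings which rotate the colors in the triangle of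
every clause, while the inputs avoid color `1`. -/
def rotationShade (H : HornSystem X Γ) (j : Fin 3) : X ⊕ Γ × Bool → Fin 3
  | .inl x => if H.level x = 0 ∧ j = 0 then 1 else j
  | .inr (_, true) => j + 1
  | .inr (_, false) => j + 2

lemma isLColoring_rotationShade (j : Fin 3) :
    IsLColoring H.graph H.lists (H.shade (H.rotationShade j)) := by
  rw [isLColoring_shade_iff]
  refine ⟨fun x y hxy hx ↦ ?_, fun _ ↦ ?_, fun g b ↦ ?_, fun g b hb ↦ ?_⟩
  · have := H.level_eq_zero_of_conflict hxy
    grind [rotationShade]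
  · simp [rotationShade]
  · have hpos : H.level (H.head g) ≠ 0 := (Nat.zero_le _ |>.trans_lt (H.level_body_lt g b)).ne'
    cases b <;> simp [rotationShade, hpos]
  · have hj : j = 0 := by grind [rotationShade]
    cases b <;> simp [rotationShade, hj]

lemma sum_lists_le_sum_rotationShade {w : X ⊕ Γ × Bool → ℕ → ℝ} (hw : ∀ v c, 0 ≤ w v c)
    (hinput : ∀ x, H.level x = 0 → w (.inl x) 1 = 0) (v : X ⊕ Γ × Bool) :
    ∑ c ∈ H.lists v, w v c ≤ ∑ j, w v (H.shade (H.rotationShade j) v) := by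
  rw [lists, sum_palette]
  match v with
  | .inl x =>
    by_cases hx : H.level x = 0
    · have h1 := hinput x hx
      have := hw (.inl x) (hue (H.level x) 1)
      simpa [Fin.sum_univ_three, shade, rotationShade, vertexLevel, hx, hue, h1] using this
    · simp [shade, rotationShade, hx]
  | .inr (g, true) =>
    exact (Equiv.sum_comp (Equiv.addRight (1 : Fin 3)) fun a ↦ w _ (hue _ a)).ge
  | .inr (g, false) =>
    exact (Equiv.sum_comp (Equiv.addRight (2 : Fin 3)) fun a ↦ w _ (hue _ a)).ge

theorem wEpsSat_one_third [Fintype X] [Fintype Γ] {w : X ⊕ Γ × Bool → ℕ → ℝ}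
    (hw : ∀ v c, 0 ≤ w v c) (hinput : ∀ x, H.level x = 0 → w (.inl x) 1 = 0) :
    WEpsSat H.graph H.lists w (1 / 3) := by
  simpa using wEpsSat_one_div_card _ isLColoring_rotationShade
    (sum_lists_le_sum_rotationShade hw hinput)

end HornSystem

/-- The variables of the knapsack system: `item i` says that item `i` is selected, and `load i k`
that some of the selected items among the first `i` have total size `k`, where `k = t + 1` stands
for all sizes exceeding `t`. -/
inductive KnapsackVar (n t : ℕ)
  | item (i : Fin n)
  | load (i : Fin (n + 1)) (k : Fin (t + 2))
  deriving Fintype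

/-- The definite clauses of the knapsack system: an empty knapsack is available as soon as some item
is selected, and a load can be kept or, if item `i` is selected, increased by its size. -/
inductive KnapsackClause (n t : ℕ)
  | start (i : Fin n)
  | keep (i : Fin n) (k : Fin (t + 2))
  | add (i : Fin n) (k : Fin (t + 2))
  deriving Fintype

section Knapsack

open KnapsackVar KnapsackClause

variable {n t : ℕ}

lemma card_knapsackVar : Fintype.card (KnapsackVar n t) = n + (n + 1) * (t + 2) := by
  simp [← Fintype.card_congr (proxy_equiv% (KnapsackVar n t))]

lemma card_knapsackClause : Fintype.card (KnapsackClause n t) = n + 2 * n * (t + 2) := by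
  simp only [← Fintype.card_congr (proxy_equiv% (KnapsackClause n t)), Fintype.card_sum,
    Fintype.card_fin, Fintype.card_sigma, Finset.sum_const, Finset.card_univ, smul_eq_mul]
  ring

/-- The load `k`, with all loads exceeding `t` identified with `t + 1`. -/
def cappedLoad (t k : ℕ) : Fin (t + 2) := ⟨min k (t + 1), by omega⟩

/-- The Horn system whose models select the sets of items of total size at most `t`. -/
def knapsack (s : Fin n → ℕ) (t : ℕ) : HornSystem (KnapsackVar n t) (KnapsackClause n t) where
  level
    | item _ => 0
    | load i _ => i + 1
  body
    | start i, _ => item i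
    | keep i k, _ => load i.castSucc k
    | add i k, true => load i.castSucc k
    | add i _, false => item i
  head
    | start _ => load 0 0
    | keep i k => load i.succ k
    | add i k => load i.succ (cappedLoad t (k + s i))
  Conflict x y := (∃ i, x = item i) ∧ y = load (Fin.last n) (Fin.last (t + 1))
  level_body_lt := by
    rintro (i | ⟨i, k⟩ | ⟨i, k⟩) (_ | _) <;> simp
  level_eq_zero_of_conflict := by
    rintro _ _ ⟨⟨i, rfl⟩, -⟩
    rfl
  level_pos_of_conflict := by
    rintro _ _ ⟨-, rfl⟩
    exact Nat.succ_pos _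

/-- The total size of those among the first `i` items that belong to `R`. -/
def selectedSum (s : Fin n → ℕ) (R : Finset (Fin n)) : Fin (n + 1) → ℕ :=
  Fin.partialSum fun i ↦ if i ∈ R then s i else 0

lemma selectedSum_last (s : Fin n → ℕ) (R : Finset (Fin n)) :
    selectedSum s R (Fin.last n) = ∑ i ∈ R, s i := by
  rw [selectedSum, Fin.partialSum, Fin.val_last, List.take_of_length_le (by simp), List.sum_ofFn,
    Finset.sum_ite_mem, Finset.univ_inter]

lemma selectedSum_succ (s : Fin n → ℕ) (R : Finset (Fin n)) (i : Fin n) :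
    selectedSum s R i.succ = selectedSum s R i.castSucc + if i ∈ R then s i else 0 :=
  Fin.partialSum_succ _ i

lemma cappedLoad_cappedLoad_add (t a b : ℕ) :
    cappedLoad t (cappedLoad t a + b) = cappedLoad t (a + b) := by
  simp only [cappedLoad, Fin.mk.injEq]
  omega

/-- The model of the knapsack system witnessing the selection `R`. -/
def knapsackModel (s : Fin n → ℕ) (t : ℕ) (R : Finset (Fin n)) : Set (KnapsackVar n t)
  | item i => i ∈ R
  | load i k => k ≤ selectedSum s R i

variable {s : Fin n → ℕ} {R : Finset (Fin n)}

lemma item_mem_knapsackModel {i : Fin n} : item i ∈ knapsackModel s t R ↔ i ∈ R := Iff.rfl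

lemma load_mem_knapsackModel {i : Fin (n + 1)} {k : Fin (t + 2)} :
    load i k ∈ knapsackModel s t R ↔ k ≤ selectedSum s R i := Iff.rfl

lemma isModel_knapsackModel (hR : ∑ i ∈ R, s i ≤ t) :
    (knapsack s t).IsModel (knapsackModel s t R) := by
  constructor
  · rintro (i | ⟨i, k⟩ | ⟨i, k⟩) hbody
    · simp [knapsack, load_mem_knapsackModel]
    · have hk : k ≤ selectedSum s R i.castSucc := hbody true
      exact hk.trans (selectedSum_succ s R i ▸ Nat.le_add_right _ _)
    · have hk : k ≤ selectedSum s R i.castSucc := hbody true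
      have hi : i ∈ R := hbody false
      calc (cappedLoad t (k + s i) : ℕ)
        _ ≤ k + s i := min_le_left _ _
        _ ≤ selectedSum s R i.castSucc + s i := Nat.add_le_add_right hk _
        _ = selectedSum s R i.succ := by rw [selectedSum_succ, if_pos hi]
  · rintro _ _ ⟨⟨i, rfl⟩, rfl⟩ -
    rw [load_mem_knapsackModel, selectedSum_last, Fin.val_last]
    omega

lemma load_selectedSum_mem {T : Set (KnapsackVar n t)} (hT : (knapsack s t).IsModel T)
    (hR : ∀ i, item i ∈ T ↔ i ∈ R) (hne : R.Nonempty) (i : Fin (n + 1)) :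
    load i (cappedLoad t (selectedSum s R i)) ∈ T := by
  induction i using Fin.induction with
  | zero =>
    obtain ⟨i, hi⟩ := hne
    exact hT.1 (start i) fun _ ↦ (hR i).2 hi
  | succ i ih =>
    rw [selectedSum_succ]
    split_ifs with hi
    · rw [← cappedLoad_cappedLoad_add]
      exact hT.1 (add i _) (Bool.forall_bool.2 ⟨(hR i).2 hi, ih⟩)
    · exact hT.1 (keep i _) fun _ ↦ ih

lemma sum_le_of_isModel {T : Set (KnapsackVar n t)} (hT : (knapsack s t).IsModel T)
    (hR : ∀ i, item i ∈ T ↔ i ∈ R) : ∑ i ∈ R, s i ≤ t := by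
  obtain rfl | hne := R.eq_empty_or_nonempty
  · simp
  obtain ⟨i, hi⟩ := id hne
  by_contra! hlt
  have hload : cappedLoad t (∑ i ∈ R, s i) = Fin.last (t + 1) := Fin.ext (min_eq_right hlt)
  refine hT.2 (item i) _ ⟨⟨i, rfl⟩, rfl⟩ ((hR i).2 hi) ?_
  rw [← hload, ← selectedSum_last]
  exact load_selectedSum_mem hT hR hne _

theorem exists_isModel_knapsack_iff :
    (∃ T, (knapsack s t).IsModel T ∧ ∀ i, item i ∈ T ↔ i ∈ R) ↔ ∑ i ∈ R, s i ≤ t :=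
  ⟨fun ⟨_, hT, hR⟩ ↦ sum_le_of_isModel hT hR,
    fun hR ↦ ⟨_, isModel_knapsackModel hR, fun _ ↦ item_mem_knapsackModel⟩⟩

lemma level_knapsack_eq_zero_iff {x : KnapsackVar n t} :
    (knapsack s t).level x = 0 ↔ ∃ i, x = item i := by
  cases x <;> simp [knapsack]

end Knapsack

theorem stmt7_general (n t : ℕ) (s : Fin n → ℕ) :
    ∃ (m : ℕ) (G : SimpleGraph (Fin m)) (L : Fin m → Finset ℕ) (v : Fin n → Fin m),
      Function.Injective v ∧
      (∀ x, (L x).card = 3) ∧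
      (∀ i, 1 ∈ L (v i)) ∧
      m = 3 * n + (5 * n + 1) * (t + 2) ∧
      (∀ R : Finset (Fin n),
        (∃ φ : Fin m → ℕ, IsLColoring G L φ ∧ ∀ i, φ (v i) = 1 ↔ i ∈ R) ↔
          ∑ i ∈ R, s i ≤ t) ∧
      (∀ w : Fin m → ℕ → ℝ, (∀ x c, 0 ≤ w x c) → (∀ i, w (v i) 1 = 0) →
        WEpsSat G L w (1 / 3)) := by
  let H := knapsack s t
  let e := (Fintype.equivFin (KnapsackVar n t ⊕ KnapsackClause n t × Bool)).symm
  let v (i : Fin n) := e.symm (.inl (.item i))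
  refine ⟨_, H.graph.comap e, fun x ↦ H.lists (e x), v, ?_, fun x ↦ card_palette _,
    fun i ↦ hue_mem_palette _ 0, ?_, fun R ↦ ?_, fun w hw hw1 ↦ ?_⟩
  · exact e.symm.injective.comp fun i j hij ↦ by simpa using hij
  · simp only [Fintype.card_sum, Fintype.card_prod, card_knapsackVar, card_knapsackClause,
      Fintype.card_bool]
    ring
  · rw [← exists_isModel_knapsack_iff, ← H.exists_isLColoring_iff_exists_isModel]
    exact exists_isLColoring_comap_equiv_iff e (p := fun φ ↦ ∀ i, φ (.inl (.item i)) = 1 ↔ i ∈ R)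
  · have hinput (x) (hx : H.level x = 0) : w (e.symm (.inl x)) 1 = 0 := by
      obtain ⟨i, rfl⟩ := level_knapsack_eq_zero_iff.1 hx
      exact hw1 i
    simpa using (H.wEpsSat_one_third (fun u ↦ hw (e.symm u)) hinput).comap_equiv e

theorem stmt7 (n t : ℕ) (hn : 0 < n) (ht : 0 < t)
    (s : Fin n → ℕ) (hs : ∀ i, 0 < s i) :
    ∃ (m : ℕ) (G : SimpleGraph (Fin m)) (L : Fin m → Finset ℕ) (v : Fin n → Fin m),
      Function.Injective v ∧
      (∀ x, (L x).card = 3) ∧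
      (∀ i, 1 ∈ L (v i)) ∧
      m < 11 * n * (t + 2) ∧
      (∀ R : Finset (Fin n),
        (∃ φ : Fin m → ℕ, IsLColoring G L φ ∧ ∀ i, φ (v i) = 1 ↔ i ∈ R) ↔
          ∑ i ∈ R, s i ≤ t) ∧
      (∀ w : Fin m → ℕ → ℝ, (∀ x c, 0 ≤ w x c) → (∀ i, w (v i) 1 = 0) →
        WEpsSat G L w (1 / 4)) := by
  obtain ⟨m, G, L, v, hv, hL, hvL, hm, hR, hw⟩ := stmt7_general n t s
  exact ⟨m, G, L, v, hv, hL, hvL, by nlinarith, hR,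
    fun w h0 h1 ↦ (hw w h0 h1).mono h0 (by norm_num)⟩
end

section
/- For every positive integer n, there exists a finite graph G with a list assignment L in which every list has size three, such that every request for G and L with singleton domain is 1-satisfiable, yet G with L is not ε-flexible for any ε > 1/n. -/
/-!
Give the vertices of the complete graph on `n` vertices lists that all contain one common color,
while each list also contains a private color, belonging to no other list. A request at a single
vertex is met by using private colors everywhere else. The request for the common color at every
vertex is met at most once by a proper coloring, that is, at a proportion of at most `1 / n`.
-/

lemma injective_update {α β : Type*} [DecidableEq α] {f : α → β} (hf : Function.Injective f)
    {a : α} {b : β} (hb : ∀ x ≠ a, f x ≠ b) : Function.Injective (Function.update f a b) := by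
  intro x y hxy
  grind [Function.update_apply]

section Coloring

variable {V : Type*} {G : SimpleGraph V} {L : V → Finset ℕ}

lemma IsLColoring.of_injective {φ : V → ℕ} (hL : ∀ v, φ v ∈ L v) (hφ : Function.Injective φ) :
    IsLColoring G L φ :=
  ⟨hL, fun _ _ huw => hφ.ne huw.ne⟩

lemma IsLColoring.card_filter_eq_le_one {φ : V → ℕ} (hφ : IsLColoring G L φ) {D : Finset V}
    (hD : G.IsClique D) (c : ℕ) : (D.filter fun v => φ v = c).card ≤ 1 := by
  refine Finset.card_le_one.mpr fun u hu w hw => ?_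
  obtain ⟨huD, huc⟩ := Finset.mem_filter.mp hu
  obtain ⟨hwD, hwc⟩ := Finset.mem_filter.mp hw
  by_contra huw
  exact hφ.2 (hD huD hwD huw) (huc.trans hwc.symm)

lemma not_flexible_of_isClique {D : Finset V} (hD : G.IsClique D) {c : ℕ}
    (hc : ∀ v ∈ D, c ∈ L v) {ε : ℝ} (hε : 1 < ε * D.card) : ¬ Flexible G L ε := by
  intro hflex
  obtain ⟨φ, hφ, hsat⟩ := hflex D (fun _ => c) hc
  have hle : ((D.filter fun v => φ v = c).card : ℝ) ≤ 1 :=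
    mod_cast hφ.card_filter_eq_le_one hD c
  exact (hε.trans_le hsat).not_ge hle

lemma exists_isLColoring_apply_eq_of_private {p : V → ℕ} (hp : ∀ v w, p v ∈ L w ↔ v = w)
    {u : V} {c : ℕ} (hc : c ∈ L u) : ∃ φ : V → ℕ, IsLColoring G L φ ∧ φ u = c := by
  classical
  have p_injective : Function.Injective p := fun v w h => (hp v w).mp (h ▸ (hp w w).mpr rfl)
  have p_ne : ∀ v ≠ u, p v ≠ c := fun v hv h => hv ((hp v u).mp (h ▸ hc))
  have update_mem : ∀ v, Function.update p u c v ∈ L v :=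
    (Function.forall_update_iff p fun v d => d ∈ L v).mpr ⟨hc, fun v _ => (hp v v).mpr rfl⟩
  exact ⟨Function.update p u c, .of_injective update_mem (injective_update p_injective p_ne),
    Function.update_self u c p⟩

end Coloring

/-- The list of the vertex `v` in a family of lists of size `k` forming a sunflower with a single
common color: the pairs `(j, j * v)` with `j < k`, encoded as natural numbers by `Nat.pair`. The
color with `j = 0` is common to all the lists, those with `j > 0` are private to `v`. -/
def sunflowerList (k v : ℕ) : Finset ℕ :=
  (Finset.range k).image fun j => Nat.pair j (j * v)

lemma card_sunflowerList (k v : ℕ) : (sunflowerList k v).card = k := by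
  have hinj : Function.Injective fun j => Nat.pair j (j * v) :=
    fun _ _ h => (Nat.pair_eq_pair.mp h).1
  rw [sunflowerList, Finset.card_image_of_injective _ hinj, Finset.card_range]

lemma zero_mem_sunflowerList {k : ℕ} (hk : 0 < k) (v : ℕ) : 0 ∈ sunflowerList k v :=
  Finset.mem_image.mpr ⟨0, Finset.mem_range.mpr hk, by simp [Nat.pair]⟩

lemma pair_one_mem_sunflowerList_iff {k : ℕ} (hk : 1 < k) {v w : ℕ} :
    Nat.pair 1 v ∈ sunflowerList k w ↔ v = w := by
  simp [sunflowerList, hk, eq_comm]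

theorem stmt9_general (k : ℕ) (hk : 2 ≤ k) (n : ℕ) (hn : 0 < n) :
    ∃ (m : ℕ) (G : SimpleGraph (Fin m)) (L : Fin m → Finset ℕ),
      (∀ v, (L v).card = k) ∧
      (∀ u : Fin m, ∀ c ∈ L u, ∃ φ : Fin m → ℕ, IsLColoring G L φ ∧ φ u = c) ∧
      ∀ ε : ℝ, 1 / n < ε → ¬ Flexible G L ε := by
  refine ⟨n, ⊤, fun v => sunflowerList k v, fun v => card_sunflowerList k v, ?_, ?_⟩
  · intro u c hc
    have private_color (v w : Fin n) : Nat.pair 1 v ∈ sunflowerList k w ↔ v = w :=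
      (pair_one_mem_sunflowerList_iff hk).trans Fin.val_inj
    exact exists_isLColoring_apply_eq_of_private private_color hc
  · intro ε hε
    have hclique : (⊤ : SimpleGraph (Fin n)).IsClique (Finset.univ : Finset (Fin n)) :=
      fun _ _ _ _ huw => huw
    have hcard : 1 < ε * (Finset.univ : Finset (Fin n)).card := by
      rw [Finset.card_fin]
      exact (div_lt_iff₀ (Nat.cast_pos.mpr hn)).mp hε
    exact not_flexible_of_isClique hclique
      (fun v _ => zero_mem_sunflowerList (by omega) v) hcard

theorem stmt9 (n : ℕ) (hn : 0 < n) :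
    ∃ (m : ℕ) (G : SimpleGraph (Fin m)) (L : Fin m → Finset ℕ),
      (∀ v, (L v).card = 3) ∧
      (∀ u : Fin m, ∀ c ∈ L u, ∃ φ : Fin m → ℕ, IsLColoring G L φ ∧ φ u = c) ∧
      ∀ ε : ℝ, 1 / n < ε → ¬ Flexible G L ε :=
  stmt9_general 3 (by norm_num) n hn
end

section
/- Let G be a finite connected graph and let L be a list assignment for G such that |L(v)| > deg(v) for all v ∈ V(G). Then for every vertex v ∈ V(G) and every color c, there exists an L-coloring of G in which no vertex other than v is assigned the color c. -/
/-!
Delete the colour `c` from the list of every vertex other than `v`. Each list then has at least as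
many colours as its vertex has neighbours, and the list of `v` has more. Colouring greedily in order
of decreasing distance from `v` succeeds: a vertex other than `v` still has an uncoloured neighbour
when its turn comes, namely the next vertex on a shortest path to `v`. On an infinite, locally
finite graph this colours every finite set of vertices, and compactness does the rest.
-/

section ListColoring

open Finset

variable {V α : Type*} {G : SimpleGraph V}

/-- The assignment `φ` of colours is a proper colouring of the subgraph of `G` induced on `s`. It is
defined on all vertices, so that partial colourings can be extended by `Function.update`. -/
def IsProperOn (G : SimpleGraph V) (φ : V → α) (s : Set V) : Prop :=
  s.Pairwise fun u w ↦ G.Adj u w → φ u ≠ φ w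

theorem IsProperOn.update_insert [DecidableEq V] {φ : V → α} {s : Set V} (hφ : IsProperOn G φ s)
    {a : V} (ha : a ∉ s) {k : α} (hk : ∀ w ∈ s, G.Adj a w → φ w ≠ k) :
    IsProperOn G (Function.update φ a k) (insert a s) := by
  have update_eq : ∀ w ∈ s, Function.update φ a k w = φ w := fun w hw ↦
    Function.update_of_ne (ne_of_mem_of_not_mem hw ha) k φ
  refine Set.Pairwise.insert (fun u hu w hw huw ↦ ?_) fun w hw _ ↦ ⟨fun haw ↦ ?_, fun hwa ↦ ?_⟩
  · rw [update_eq u hu, update_eq w hw]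
    exact hφ hu hw huw
  · rw [update_eq w hw, Function.update_self]
    exact (hk w hw haw).symm
  · rw [update_eq w hw, Function.update_self]
    exact hk w hw hwa.symm

theorem exists_coloring_forall_mem_of_forall_finset {L : V → Finset α}
    (h : ∀ s : Finset V, ∃ φ : V → α, (∀ u, φ u ∈ L u) ∧ IsProperOn G φ s) :
    ∃ φ : G.Coloring α, ∀ u, φ u ∈ L u := by
  classical
  choose g hgL hg using h
  obtain ⟨χ, hχ⟩ := Finset.rado_selection (β := fun u ↦ L u) fun s u ↦ ⟨g s u, hgL s u⟩
  refine ⟨.mk (fun u ↦ χ u) fun {u w} huw ↦ ?_, fun u ↦ (χ u).2⟩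
  obtain ⟨t, hst, ht⟩ := hχ {u, w}
  have hu : u ∈ ({u, w} : Finset V) := mem_insert_self u {w}
  have hw : w ∈ ({u, w} : Finset V) := mem_insert_of_mem (mem_singleton_self w)
  rw [ht u hu, ht w hw]
  exact hg t (hst hu) (hst hw) huw.ne huw

theorem exists_adj_dist_lt_of_ne (hG : G.Connected) {u v : V} (huv : u ≠ v) :
    ∃ w, G.Adj u w ∧ G.dist w v < G.dist u v := by
  obtain ⟨p, hp⟩ := hG.exists_walk_length_eq_dist u v
  obtain ⟨w, huw, q, rfl⟩ := SimpleGraph.Walk.exists_eq_cons_of_ne huv p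
  rw [SimpleGraph.Walk.length_cons] at hp
  exact ⟨w, huw, hp ▸ Nat.lt_succ_of_le (SimpleGraph.dist_le q)⟩

section LocallyFinite

variable [G.LocallyFinite] {L : V → Finset α}

theorem exists_isProperOn_of_card_neighbor_le_lt {β : Type*} [LinearOrder β] (f : V → β)
    (hL : ∀ u, #{w ∈ G.neighborFinset u | f u ≤ f w} < #(L u)) (s : Finset V) :
    ∃ φ : V → α, (∀ u, φ u ∈ L u) ∧ IsProperOn G φ s := by
  classical
  induction s using Finset.induction_on_min_value f with
  | empty =>
    choose φ hφ using fun u ↦ card_pos.1 ((Nat.zero_le _).trans_lt (hL u))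
    exact ⟨φ, hφ, by simp [IsProperOn]⟩
  | insert a s ha hmin ih =>
    obtain ⟨φ, hφL, hφ⟩ := ih
    obtain ⟨k, hkL, hk⟩ : ∃ k ∈ L a, k ∉ image φ {w ∈ G.neighborFinset a | f a ≤ f w} :=
      exists_mem_notMem_of_card_lt_card (card_image_le.trans_lt (hL a))
    have hk_ne : ∀ w ∈ (s : Set V), G.Adj a w → φ w ≠ k := fun w hw haw hwk ↦
      hk <| mem_image.2 ⟨w, mem_filter.2 ⟨(G.mem_neighborFinset a w).2 haw, hmin w hw⟩, hwk⟩
    refine ⟨Function.update φ a k, fun u ↦ ?_, ?_⟩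
    · obtain rfl | hu := eq_or_ne u a
      · rwa [Function.update_self]
      · rw [Function.update_of_ne hu]
        exact hφL u
    · rw [coe_insert]
      exact hφ.update_insert (mem_coe.not.2 ha) hk_ne

theorem card_neighbor_dist_le_lt_degree (hG : G.Connected) {u v : V} (huv : u ≠ v) :
    #{w ∈ G.neighborFinset u | G.dist u v ≤ G.dist w v} < G.degree u := by
  obtain ⟨w, huw, hw⟩ := exists_adj_dist_lt_of_ne hG huv
  exact card_lt_card (filter_ssubset.2 ⟨w, (G.mem_neighborFinset u w).2 huw, hw.not_ge⟩)

theorem exists_coloring_forall_mem_of_degree_le_card (hG : G.Connected)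
    (hL : ∀ u, G.degree u ≤ #(L u)) {v : V} (hv : G.degree v < #(L v)) :
    ∃ φ : G.Coloring α, ∀ u, φ u ∈ L u := by
  refine exists_coloring_forall_mem_of_forall_finset
    (exists_isProperOn_of_card_neighbor_le_lt (G.dist · v) fun u ↦ ?_)
  obtain rfl | huv := eq_or_ne u v
  · exact (card_filter_le _ _).trans_lt hv
  · exact (card_neighbor_dist_le_lt_degree hG huv).trans_le (hL u)

theorem stmt10_general (hG : G.Connected) (hL : ∀ u, G.degree u < #(L u)) (v : V) (c : V → α) :
    ∃ φ : G.Coloring α, (∀ u, φ u ∈ L u) ∧ ∀ u, u ≠ v → φ u ≠ c u := by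
  classical
  let L' : V → Finset α := Function.update (fun u ↦ (L u).erase (c u)) v (L v)
  have L'_self : L' v = L v := Function.update_self ..
  have L'_of_ne {u : V} (huv : u ≠ v) : L' u = (L u).erase (c u) := Function.update_of_ne huv ..
  have degree_le (u : V) : G.degree u ≤ #(L' u) := by
    obtain rfl | huv := eq_or_ne u v
    · exact L'_self ▸ (hL u).le
    · exact L'_of_ne huv ▸ (Nat.le_sub_one_of_lt (hL u)).trans pred_card_le_card_erase
  obtain ⟨φ, hφ⟩ := exists_coloring_forall_mem_of_degree_le_card hG degree_le (L'_self ▸ hL v)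
  have hφ_erase {u : V} (huv : u ≠ v) : φ u ∈ (L u).erase (c u) := L'_of_ne huv ▸ hφ u
  refine ⟨φ, fun u ↦ ?_, fun u huv ↦ ne_of_mem_erase (hφ_erase huv)⟩
  obtain rfl | huv := eq_or_ne u v
  · exact L'_self ▸ hφ u
  · exact mem_of_mem_erase (hφ_erase huv)

end LocallyFinite

end ListColoring

theorem stmt10 {V : Type*} [Fintype V] [DecidableEq V] (G : SimpleGraph V)
    [DecidableRel G.Adj] (hG : G.Connected) (L : V → Finset ℕ)
    (hL : ∀ v, G.degree v < (L v).card) (v : V) (c : ℕ) :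
    ∃ φ : V → ℕ, IsLColoring G L φ ∧ ∀ u : V, u ≠ v → φ u ≠ c := by
  obtain ⟨φ, hφL, hφ⟩ := stmt10_general hG hL v fun _ ↦ c
  exact ⟨φ, ⟨hφL, fun _ _ ↦ φ.valid⟩, hφ⟩
end
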